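/- Suppose there are two agents with weights w_1 and w_2 = r*w_1 where r >= 1, and let D be a PDF-bounded distribution on [0,1]. For any function m = m(r) of positive integers with m(r)/sqrt(r) tending to infinity as r tends to infinity, when the 2m utilities are drawn independently from D, the probability that a weighted envy-free (WEF) allocation exists tends to 1 as r tends to infinity; the same holds for weighted proportional (WPROP) allocations. -/

import Mathlib

open Finset MeasureTheory
open scoped ENNReal

/-- An allocation is a partition of the items into `n` bundles: every item belongs to
exactly one bundle. -/
def IsAllocation {n m : ℕ} (A : Fin n → Finset (Fin m)) : Prop :=
  ∀ g : Fin m, ∃! i : Fin n, g ∈ A i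

/-- An allocation `A` is weighted envy-free (WEF) if `u_i(A_i)/w_i ≥ u_i(A_j)/w_j` for
all agents `i, j`. -/
def IsWEF {n m : ℕ} (w : Fin n → ℝ) (u : Fin n → Fin m → ℝ)
    (A : Fin n → Finset (Fin m)) : Prop :=
  ∀ i j : Fin n, (∑ g ∈ A j, u i g) / w j ≤ (∑ g ∈ A i, u i g) / w i

/-- An allocation `A` is weighted proportional (WPROP) if
`u_i(A_i) ≥ (w_i/W)·u_i(M)` for every agent `i`, where `W` is the sum of the weights. -/
def IsWPROP {n m : ℕ} (w : Fin n → ℝ) (u : Fin n → Fin m → ℝ)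
    (A : Fin n → Finset (Fin m)) : Prop :=
  ∀ i : Fin n, w i / (∑ j, w j) * (∑ g, u i g) ≤ ∑ g ∈ A i, u i g

/-- A probability distribution `D` on `[0,1]` is `(α,β)`-PDF-bounded if it has a density
`f` (with respect to Lebesgue measure restricted to `[0,1]`) satisfying `α ≤ f(x) ≤ β`
for all `x ∈ [0,1]`.  (Such a distribution is in particular non-atomic.) -/
def PDFBounded (α β : ℝ) (D : MeasureTheory.Measure ℝ) : Prop :=
  ∃ f : ℝ → ℝ≥0∞,
    D = (MeasureTheory.volume.restrict (Set.Icc (0:ℝ) 1)).withDensity f ∧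
    ∀ x ∈ Set.Icc (0:ℝ) 1, ENNReal.ofReal α ≤ f x ∧ f x ≤ ENNReal.ofReal β

/-- The joint distribution of the `n·m` utilities `u i g`, drawn independently from `D`. -/
noncomputable def utilMeasure (n m : ℕ) (D : MeasureTheory.Measure ℝ) :
    MeasureTheory.Measure (Fin n → Fin m → ℝ) :=
  MeasureTheory.Measure.pi fun _ : Fin n => MeasureTheory.Measure.pi fun _ : Fin m => D

/-!
Let `μ` be the mean of `D`, `q = μ / 2` and `s = m / (1 + r)`. Give agent `0` about `s / q` items,
each worth at least `q` to agent `0` and at most `q² s / (s + 1)` to agent `1`, and give agent `1`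
all the others. Agent `0` then gets at least `s`, and so at least a share `1 / (1 + r)` of the
whole set, while agent `1` gives away at most `q s = q m / (1 + r)`, which is at most a share
`1 / (1 + r)` as soon as agent `1` values the whole set at `q m` or more; by Chebyshev's inequality
this is likely. The density bound `α` makes a given item suitable with probability at least a
constant times `s / (s + 1)`, so, again by Chebyshev, there are likely enough suitable items once
`m s / (s + 1)` outgrows `s + 1`. This is where `m / √r → ∞` enters:
`(s + 1)² / (m s) = 1 / (1 + r) + 2 / m + 1 / m² + r / m²`.
-/

open Filter ProbabilityTheory
open scoped Topology

section Allocation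

variable {n m : ℕ}

lemma IsAllocation.sum_sum_eq {A : Fin n → Finset (Fin m)} (hA : IsAllocation A)
    (f : Fin m → ℝ) : ∑ j, ∑ g ∈ A j, f g = ∑ g, f g := by
  have hdisj : (Set.univ : Set (Fin n)).PairwiseDisjoint A := fun i _ j _ hij =>
    Finset.disjoint_left.2 fun g hi hj => hij ((hA g).unique hi hj)
  have hcover : (univ : Finset (Fin n)).biUnion A = univ :=
    Finset.eq_univ_of_forall fun g => by simpa using (hA g).exists
  rw [← hcover, Finset.sum_biUnion (by simpa using hdisj)]

lemma IsWEF.isWPROP {w : Fin n → ℝ} (hw : ∀ i, 0 < w i) {u : Fin n → Fin m → ℝ}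
    {A : Fin n → Finset (Fin m)} (hA : IsAllocation A) (h : IsWEF w u A) : IsWPROP w u A := by
  intro i
  have hW : 0 < ∑ j, w j := Finset.sum_pos (fun j _ => hw j) ⟨i, mem_univ i⟩
  have htotal : ∑ g, u i g ≤ (∑ j, w j) * ((∑ g ∈ A i, u i g) / w i) := by
    rw [← hA.sum_sum_eq, Finset.sum_mul]
    exact Finset.sum_le_sum fun j _ => (div_le_iff₀' (hw j)).1 (h i j)
  rw [div_mul_eq_mul_div, div_le_iff₀ hW]
  calc w i * ∑ g, u i g ≤ w i * ((∑ j, w j) * ((∑ g ∈ A i, u i g) / w i)) := by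
        gcongr
        exact (hw i).le
    _ = (∑ g ∈ A i, u i g) * ∑ j, w j := by
        have := (hw i).ne'
        field_simp

lemma isAllocation_pair_compl (B : Finset (Fin m)) : IsAllocation ![B, Bᶜ] := by
  intro g
  by_cases hg : g ∈ B
  · exact ⟨0, by simpa using hg, fun i hi => by fin_cases i <;> simp_all⟩
  · exact ⟨1, by simpa using hg, fun i hi => by fin_cases i <;> simp_all⟩

variable {w₁ w₂ : ℝ} {u : Fin 2 → Fin m → ℝ}

lemma isWEF_pair_compl (hw₁ : 0 < w₁) (hw₂ : 0 < w₂) {B : Finset (Fin m)}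
    (h₀ : w₁ * ∑ g, u 0 g ≤ (w₁ + w₂) * ∑ g ∈ B, u 0 g)
    (h₁ : (w₁ + w₂) * ∑ g ∈ B, u 1 g ≤ w₁ * ∑ g, u 1 g) :
    IsWEF ![w₁, w₂] u ![B, Bᶜ] := by
  rw [← Finset.sum_add_sum_compl B] at h₀ h₁
  simp only [IsWEF, Fin.forall_fin_two, Matrix.cons_val_zero, Matrix.cons_val_one, le_refl,
    true_and, and_true, div_le_div_iff₀ hw₁ hw₂, div_le_div_iff₀ hw₂ hw₁]
  constructor <;> linarith

lemma exists_isWEF_of_le_card (hw₁ : 0 < w₁) (hw₂ : 0 < w₂) {S : Finset (Fin m)} {k : ℕ}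
    (hk : k ≤ #S) {a b : ℝ} (ha : ∀ g ∈ S, a ≤ u 0 g) (hb : ∀ g ∈ S, u 1 g ≤ b)
    (h₀ : w₁ * ∑ g, u 0 g ≤ (w₁ + w₂) * (k * a))
    (h₁ : (w₁ + w₂) * (k * b) ≤ w₁ * ∑ g, u 1 g) :
    ∃ A, IsAllocation A ∧ IsWEF ![w₁, w₂] u A := by
  obtain ⟨B, hBS, rfl⟩ := Finset.exists_subset_card_eq hk
  have hB₀ : #B * a ≤ ∑ g ∈ B, u 0 g := by
    simpa using Finset.card_nsmul_le_sum B (u 0) a fun g hg => ha g (hBS hg)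
  have hB₁ : ∑ g ∈ B, u 1 g ≤ #B * b := by
    simpa using Finset.sum_le_card_nsmul B (u 1) b fun g hg => hb g (hBS hg)
  exact ⟨![B, Bᶜ], isAllocation_pair_compl B, isWEF_pair_compl hw₁ hw₂
    (h₀.trans (by gcongr)) (le_trans (by gcongr) h₁)⟩

end Allocation

section Strategy

variable {m : ℕ} {q r t : ℝ} {u : Fin 2 → Fin m → ℝ}

/-- The proportional share of agent `0`, counted in items, when agent `1` weighs `r` times as
much. -/
noncomputable def itemShare (m : ℕ) (r : ℝ) : ℝ := m / (1 + r)

/-- The utility level for agent `1` at which `(s + 1) / q` items are together worth `q * s`. -/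
noncomputable def lowUtility (q s : ℝ) : ℝ := q ^ 2 * s / (s + 1)

/-- The items worth at least `q` to agent `0` and at most `t` to agent `1`: giving them to agent
`0` serves that agent at little cost to agent `1`. -/
noncomputable def cheapItems (q t : ℝ) (u : Fin 2 → Fin m → ℝ) : Finset (Fin m) :=
  {g | q ≤ u 0 g ∧ u 1 g ≤ t}

lemma mem_cheapItems {g : Fin m} : g ∈ cheapItems q t u ↔ q ≤ u 0 g ∧ u 1 g ≤ t := by
  simp [cheapItems]

lemma itemShare_nonneg (m : ℕ) (hr : 0 < r) : 0 ≤ itemShare m r := by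
  unfold itemShare
  positivity

lemma lowUtility_mem_Icc (hq : q ∈ Set.Ioc 0 1) {s : ℝ} (hs : 0 ≤ s) :
    lowUtility q s ∈ Set.Icc 0 1 := by
  obtain ⟨hq0, hq1⟩ := hq
  refine ⟨by unfold lowUtility; positivity, ?_⟩
  rw [lowUtility, div_le_one (by positivity)]
  nlinarith [pow_le_one₀ (n := 2) hq0.le hq1]

lemma exists_isWEF_of_le_card_cheapItems {w : ℝ} (hw : 0 < w) (hr : 0 < r)
    (hq : q ∈ Set.Ioc 0 1) (hu : ∀ g, u 0 g ≤ 1) (htotal : m * q ≤ ∑ g, u 1 g)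
    (hcard : (itemShare m r + 1) / q ≤ #(cheapItems q (lowUtility q (itemShare m r)) u)) :
    ∃ A, IsAllocation A ∧ IsWEF ![w, r * w] u A := by
  obtain ⟨hq0, hq1⟩ := hq
  set s := itemShare m r with hs
  have hs0 : 0 ≤ s := itemShare_nonneg m hr
  have hsm : (1 + r) * s = m := by rw [hs, itemShare]; field_simp
  have hk : (⌈s / q⌉₊ : ℝ) ≤ (s + 1) / q := by
    have : 1 ≤ 1 / q := (one_le_div hq0).2 hq1
    rw [add_div]
    linarith [Nat.ceil_lt_add_one (show 0 ≤ s / q by positivity)]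
  refine exists_isWEF_of_le_card hw (by positivity) (k := ⌈s / q⌉₊)
    (by exact_mod_cast hk.trans hcard) (fun g hg => (mem_cheapItems.1 hg).1)
    (fun g hg => (mem_cheapItems.1 hg).2) ?_ ?_
  · have hsum : ∑ g, u 0 g ≤ m := by
      simpa using Finset.sum_le_card_nsmul univ (u 0) 1 fun g _ => hu g
    calc w * ∑ g, u 0 g ≤ w * m := by gcongr
      _ = (w + r * w) * (s / q * q) := by rw [← hsm]; field_simp
      _ ≤ (w + r * w) * (⌈s / q⌉₊ * q) := by gcongr; exact Nat.le_ceil _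
  · calc (w + r * w) * (⌈s / q⌉₊ * lowUtility q s)
        ≤ (w + r * w) * ((s + 1) / q * lowUtility q s) := by
          gcongr
          exact (lowUtility_mem_Icc ⟨hq0, hq1⟩ hs0).1
      _ = w * (m * q) := by rw [← hsm, lowUtility]; field_simp
      _ ≤ w * ∑ g, u 1 g := by gcongr

end Strategy

section Probability

variable {Ω : Type*} [MeasurableSpace Ω] {μ : Measure Ω} [IsProbabilityMeasure μ]

lemma measure_sum_lt_half_integral_le {ι : Type*} [Fintype ι] {X : ι → Ω → ℝ}
    (hX : ∀ i, AEMeasurable (X i) μ) (hX01 : ∀ i, ∀ᵐ ω ∂μ, X i ω ∈ Set.Icc 0 1)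
    (hindep : Pairwise fun i j => IndepFun (X i) (X j) μ) {M : ℝ} (hM : ∑ i, μ[X i] = M)
    (hM0 : 0 < M) : μ {ω | ∑ i, X i ω < M / 2} ≤ ENNReal.ofReal (4 / M) := by
  have hL2 (i : ι) : MemLp (X i) 2 μ :=
    memLp_of_bounded (hX01 i) (hX i).aestronglyMeasurable 2
  have hmean : μ[∑ i, X i] = M := by
    simp only [Finset.sum_apply]
    rw [integral_finsetSum _ fun i _ => (hL2 i).integrable one_le_two, hM]
  have hvar : Var[∑ i, X i; μ] ≤ M := by
    rw [IndepFun.variance_sum (fun i _ => hL2 i) fun i _ j _ hij => hindep hij, ← hM]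
    refine Finset.sum_le_sum fun i _ => (variance_le_sub_mul_sub (hX01 i) (hX i)).trans ?_
    nlinarith [sq_nonneg (μ[X i])]
  have hcheb := meas_ge_le_variance_div_sq (memLp_finsetSum' univ fun i _ => hL2 i)
    (half_pos hM0)
  rw [hmean] at hcheb
  calc μ {ω | ∑ i, X i ω < M / 2} ≤ μ {ω | M / 2 ≤ |(∑ i, X i) ω - M|} := by
        refine measure_mono fun ω hω => ?_
        rw [Set.mem_ofPred_eq] at hω ⊢
        rw [Finset.sum_apply, abs_sub_comm]
        exact le_trans (by linarith) (le_abs_self _)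
    _ ≤ ENNReal.ofReal (Var[∑ i, X i; μ] / (M / 2) ^ 2) := hcheb
    _ ≤ ENNReal.ofReal (M / (M / 2) ^ 2) := by gcongr
    _ = ENNReal.ofReal (4 / M) := by congr 1; field_simp; ring

lemma half_integral_le_measureReal_half_integral_le {X : Ω → ℝ} (hX : AEMeasurable X μ)
    (hX01 : ∀ᵐ ω ∂μ, X ω ∈ Set.Icc 0 1) : μ[X] / 2 ≤ μ.real {ω | μ[X] / 2 ≤ X ω} := by
  have hmeas : NullMeasurableSet {ω | μ[X] / 2 ≤ X ω} μ :=
    nullMeasurableSet_le aemeasurable_const hX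
  have hint : Integrable ({ω | μ[X] / 2 ≤ X ω}.indicator fun _ => (1 : ℝ)) μ :=
    (integrable_const 1).indicator₀ hmeas
  suffices μ[X] ≤ μ[X] / 2 + μ.real {ω | μ[X] / 2 ≤ X ω} by linarith
  calc μ[X] ≤ ∫ ω, (μ[X] / 2 + {ω | μ[X] / 2 ≤ X ω}.indicator (fun _ => (1 : ℝ)) ω) ∂μ := by
        refine integral_mono_of_nonneg (hX01.mono fun ω h => h.1)
          ((integrable_const _).add hint) ?_
        filter_upwards [hX01] with ω h
        have hmean : 0 ≤ μ[X] := integral_nonneg_of_ae (hX01.mono fun ω h => h.1)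
        by_cases hω : μ[X] / 2 ≤ X ω
        · simpa [Set.indicator, hω] using by linarith [h.2]
        · simpa [Set.indicator, hω] using (not_le.1 hω).le
    _ = μ[X] / 2 + μ.real {ω | μ[X] / 2 ≤ X ω} := by
        rw [integral_add (integrable_const _) hint, integral_indicator₀ hmeas]
        simp

lemma tendsto_measure_one_of_tendsto_measure_zero {ι : Type*} {l : Filter ι} {Ω : ι → Type*}
    [∀ i, MeasurableSpace (Ω i)] {μ : ∀ i, Measure (Ω i)} [∀ i, IsProbabilityMeasure (μ i)]
    {bad good : ∀ i, Set (Ω i)} (hbad : Tendsto (fun i => μ i (bad i)) l (𝓝 0))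
    (h : ∀ᶠ i in l, ∀ᵐ ω ∂μ i, ω ∉ bad i → ω ∈ good i) :
    Tendsto (fun i => μ i (good i)) l (𝓝 1) := by
  have hlower : Tendsto (fun i => 1 - μ i (bad i)) l (𝓝 1) := by
    simpa using ENNReal.Tendsto.sub tendsto_const_nhds hbad (Or.inl ENNReal.one_ne_top)
  refine tendsto_of_tendsto_of_tendsto_of_le_of_le' hlower tendsto_const_nhds ?_
    (.of_forall fun i => prob_le_one)
  filter_upwards [h] with i hi
  rw [tsub_le_iff_right]
  calc 1 = μ i Set.univ := measure_univ.symm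
    _ ≤ μ i (good i ∪ bad i) := measure_mono_ae (hi.mono fun ω hω _ => by
        by_cases hb : ω ∈ bad i
        exacts [Or.inr hb, Or.inl (hω hb)])
    _ ≤ μ i (good i) + μ i (bad i) := measure_union_le _ _

end Probability

lemma map_flip_pi_pi {ι κ : Type*} [Fintype ι] [Fintype κ] {X : Type*} [MeasurableSpace X]
    (μ : ι → κ → Measure X) [∀ i j, IsProbabilityMeasure (μ i j)] :
    (Measure.pi fun i => Measure.pi (μ i)).map (fun u j i => u i j) =
      Measure.pi fun j => Measure.pi fun i => μ i j := by
  have hswap := Measure.map_infinitePi_infinitePi_of_inj (P := fun p : ι × κ => μ p.1 p.2)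
    (Prod.swap_injective (α := κ) (β := ι))
  simp only [← Measure.infinitePi_eq_pi]
  rw [← Measure.infinitePi_map_curry μ, ← Measure.infinitePi_map_curry fun j i => μ i j,
    Measure.map_map (by fun_prop) (by fun_prop)]
  trans ((Measure.infinitePi fun p : ι × κ => μ p.1 p.2).map fun v p => v p.swap).map
    (MeasurableEquiv.curry κ ι X)
  · rw [Measure.map_map (by fun_prop) (by fun_prop)]
    rfl
  · rw [hswap]
    rfl

section UtilMeasure

variable {n m : ℕ} {D : Measure ℝ} [IsProbabilityMeasure D]

instance isProbabilityMeasure_utilMeasure : IsProbabilityMeasure (utilMeasure n m D) := by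
  unfold utilMeasure
  infer_instance

lemma measurePreserving_utilMeasure_item (g : Fin m) :
    MeasurePreserving (fun (u : Fin n → Fin m → ℝ) i => u i g) (utilMeasure n m D)
      (Measure.pi fun _ => D) :=
  measurePreserving_pi _ _ fun _ => measurePreserving_eval (fun _ => D) g

lemma iIndepFun_utilMeasure_item :
    iIndepFun (fun (g : Fin m) (u : Fin n → Fin m → ℝ) i => u i g) (utilMeasure n m D) := by
  rw [iIndepFun_iff_map_fun_eq_pi_map fun g =>
    (measurePreserving_utilMeasure_item g).aemeasurable]
  simp only [(measurePreserving_utilMeasure_item _).map_eq]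
  exact map_flip_pi_pi fun _ _ => D

lemma ae_utilMeasure_of_ae {p : ℝ → Prop} (hp : ∀ᵐ x ∂D, p x) :
    ∀ᵐ u ∂utilMeasure n m D, ∀ i g, p (u i g) :=
  ae_all_iff.2 fun i => ae_all_iff.2 fun g =>
    ((measurePreserving_eval _ g).comp (measurePreserving_eval
      (fun _ => Measure.pi fun _ => D) i)).quasiMeasurePreserving.ae hp

variable {ι : Type*} {l : Filter ι} {m : ι → ℕ}

lemma tendsto_utilMeasure_sum_lt {φ : ι → (Fin n → ℝ) → ℝ} (hφ : ∀ i, Measurable (φ i))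
    (hφ01 : ∀ i, ∀ᵐ v ∂Measure.pi fun _ => D, φ i v ∈ Set.Icc 0 1) {c : ι → ℝ}
    (hmean : Tendsto (fun i => m i * ∫ v, φ i v ∂Measure.pi fun _ => D) l atTop)
    (hc : ∀ᶠ i in l, c i ≤ m i * (∫ v, φ i v ∂Measure.pi fun _ => D) / 2) :
    Tendsto (fun i => utilMeasure n (m i) D {u | ∑ g, φ i (fun j => u j g) < c i}) l (𝓝 0) := by
  have hbound : Tendsto
      (fun i => ENNReal.ofReal (4 / (m i * ∫ v, φ i v ∂Measure.pi fun _ => D))) l (𝓝 0) := by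
    simpa using ENNReal.tendsto_ofReal (hmean.const_div_atTop 4)
  refine tendsto_of_tendsto_of_tendsto_of_le_of_le' tendsto_const_nhds hbound
    (.of_forall fun i => zero_le) ?_
  filter_upwards [hc, hmean.eventually_gt_atTop 0] with i hci hpos
  have hitem (g : Fin (m i)) := measurePreserving_utilMeasure_item (n := n) (D := D) g
  refine (measure_mono fun u hu => hu.trans_le hci).trans <|
    measure_sum_lt_half_integral_le (X := fun g u => φ i fun j => u j g)
      (fun g => ((hφ i).comp (hitem g).measurable).aemeasurable)
      (fun g => (hitem g).quasiMeasurePreserving.ae (hφ01 i))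
      (fun g h hgh => (iIndepFun_utilMeasure_item.indepFun hgh).comp (hφ i) (hφ i)) ?_ hpos
  have hmap (g : Fin (m i)) : ∫ u, φ i (fun j => u j g) ∂utilMeasure n (m i) D =
      ∫ v, φ i v ∂Measure.pi fun _ => D := by
    rw [← (hitem g).map_eq, integral_map (hitem g).aemeasurable (hφ i).aestronglyMeasurable]
  simp [hmap]

lemma tendsto_utilMeasure_sum_agent_lt (hD : ∀ᵐ x ∂D, x ∈ Set.Icc 0 1)
    (hmean : 0 < ∫ x, x ∂D) (hm : Tendsto (fun i => (m i : ℝ)) l atTop) (j : Fin n) :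
    Tendsto (fun i => utilMeasure n (m i) D {u | ∑ g, u j g < m i * ((∫ x, x ∂D) / 2)}) l
      (𝓝 0) := by
  have hj := measurePreserving_eval (fun _ : Fin n => D) j
  have hint : ∫ v : Fin n → ℝ, v j ∂Measure.pi (fun _ => D) = ∫ x, x ∂D := by
    conv_rhs => rw [← hj.map_eq, integral_map hj.aemeasurable (by fun_prop)]
  refine tendsto_utilMeasure_sum_lt (φ := fun _ v => v j) (fun _ => by fun_prop)
    (fun _ => hj.quasiMeasurePreserving.ae hD) ?_ (.of_forall fun i => ?_)
  · simpa only [hint] using hm.atTop_mul_const hmean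
  · rw [hint, mul_div_assoc]

lemma tendsto_utilMeasure_card_cheapItems_lt {q : ℝ} {t c : ι → ℝ}
    (hmean : Tendsto (fun i => m i * (D.real (Set.Ici q) * D.real (Set.Iic (t i)))) l atTop)
    (hc : ∀ᶠ i in l, c i ≤ m i * (D.real (Set.Ici q) * D.real (Set.Iic (t i))) / 2) :
    Tendsto (fun i => utilMeasure 2 (m i) D {u | #(cheapItems q (t i) u) < c i}) l (𝓝 0) := by
  set box : ι → Set (Fin 2 → ℝ) := fun i => {v | q ≤ v 0 ∧ v 1 ≤ t i} with hbox
  have hbox_meas (i : ι) : MeasurableSet (box i) :=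
    (measurableSet_le measurable_const (measurable_pi_apply 0)).inter
      (measurableSet_le (measurable_pi_apply 1) measurable_const)
  have hbox_pi (i : ι) : box i = Set.univ.pi ![Set.Ici q, Set.Iic (t i)] := by
    ext v
    simp [hbox, Fin.forall_fin_two]
  have hint (i : ι) : ∫ v, (box i).indicator (fun _ => (1 : ℝ)) v ∂Measure.pi (fun _ => D) =
      D.real (Set.Ici q) * D.real (Set.Iic (t i)) := by
    rw [integral_indicator_const _ (hbox_meas i), measureReal_def, hbox_pi, Measure.pi_pi]
    simp [measureReal_def]
  have hcard (i : ι) (u : Fin 2 → Fin (m i) → ℝ) :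
      ∑ g, (box i).indicator (fun _ => (1 : ℝ)) (fun j => u j g) = #(cheapItems q (t i) u) := by
    simp [hbox, cheapItems, Set.indicator_apply]
  simp only [← hint, ← hcard] at hmean hc ⊢
  refine tendsto_utilMeasure_sum_lt (fun i => measurable_const.indicator (hbox_meas i))
    (fun i => .of_forall fun v => ⟨?_, ?_⟩) hmean hc
  · exact Set.indicator_nonneg (fun _ _ => zero_le_one) v
  · exact Set.indicator_le_self' (fun _ _ => zero_le_one) v

end UtilMeasure

section Growth

variable {ι : Type*} {l : Filter ι} {r : ι → ℝ} {m : ι → ℕ}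

lemma tendsto_natCast_of_div_sqrt (hr : Tendsto r l atTop)
    (hgrow : Tendsto (fun i => (m i : ℝ) / √(r i)) l atTop) :
    Tendsto (fun i => (m i : ℝ)) l atTop := by
  refine (hgrow.atTop_mul_atTop₀ (Real.tendsto_sqrt_atTop.comp hr)).congr' ?_
  filter_upwards [hr.eventually_gt_atTop 0] with i hi
  exact div_mul_cancel₀ _ (Real.sqrt_pos.2 hi).ne'

lemma tendsto_mul_itemShare_div_sq (hr : Tendsto r l atTop)
    (hgrow : Tendsto (fun i => (m i : ℝ) / √(r i)) l atTop) :
    Tendsto (fun i => m i * itemShare (m i) (r i) / (itemShare (m i) (r i) + 1) ^ 2) l atTop := by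
  have hm := tendsto_natCast_of_div_sqrt hr hgrow
  have hinv : Tendsto (fun i => (1 + r i)⁻¹ + 2 * (m i : ℝ)⁻¹ + (m i : ℝ)⁻¹ ^ 2 +
      ((m i : ℝ) / √(r i))⁻¹ ^ 2) l (𝓝 0) := by
    simpa using (((tendsto_atTop_add_const_left l 1 hr).inv_tendsto_atTop.add
      (hm.inv_tendsto_atTop.const_mul 2)).add (hm.inv_tendsto_atTop.pow 2)).add
      (hgrow.inv_tendsto_atTop.pow 2)
  have hpos : ∀ᶠ i in l, 0 < r i ∧ (0 : ℝ) < m i :=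
    (hr.eventually_gt_atTop 0).and (hm.eventually_gt_atTop 0)
  have hinv_pos := tendsto_nhdsWithin_iff.2 ⟨hinv, hpos.mono fun i ⟨hri, hmi⟩ =>
    Set.mem_Ioi.2 (by positivity)⟩
  refine hinv_pos.inv_tendsto_nhdsGT_zero.congr' (hpos.mono fun i ⟨hri, hmi⟩ => ?_)
  have hsqrt : ((m i : ℝ) / √(r i))⁻¹ ^ 2 = r i / (m i : ℝ) ^ 2 := by
    rw [inv_div, div_pow, Real.sq_sqrt hri.le]
  simp only [Pi.inv_apply, hsqrt, itemShare]
  field_simp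
  ring

lemma tendsto_mul_lowUtility_div {q : ℝ} (hq : 0 < q) (hr : Tendsto r l atTop)
    (hgrow : Tendsto (fun i => (m i : ℝ) / √(r i)) l atTop) :
    Tendsto (fun i => m i * lowUtility q (itemShare (m i) (r i)) / (itemShare (m i) (r i) + 1)) l
      atTop := by
  refine ((tendsto_mul_itemShare_div_sq hr hgrow).const_mul_atTop (pow_pos hq 2)).congr fun i => ?_
  rw [lowUtility, mul_div_assoc', mul_div_assoc', div_div, sq (_ + _)]
  ring

end Growth

section Existence

variable {D : Measure ℝ} [IsProbabilityMeasure D] {α : ℝ} {ι : Type*} {l : Filter ι} {r : ι → ℝ}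
  {m : ι → ℕ}

lemma tendsto_utilMeasure_card_cheapItems_lt_itemShare (hα : 0 < α)
    (hlow : ∀ b ∈ Set.Icc 0 1, α * b ≤ D.real (Set.Iic b)) {q : ℝ} (hq : q ∈ Set.Ioc 0 1)
    (hDq : q ≤ D.real (Set.Ici q)) (hr : Tendsto r l atTop)
    (hgrow : Tendsto (fun i => (m i : ℝ) / √(r i)) l atTop) :
    Tendsto (fun i => utilMeasure 2 (m i) D
      {u | #(cheapItems q (lowUtility q (itemShare (m i) (r i))) u) <
        (itemShare (m i) (r i) + 1) / q}) l (𝓝 0) := by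
  set s : ι → ℝ := fun i => itemShare (m i) (r i)
  set E : ι → ℝ := fun i => m i * (D.real (Set.Ici q) * D.real (Set.Iic (lowUtility q (s i))))
  have hs : ∀ᶠ i in l, 0 ≤ s i :=
    (hr.eventually_gt_atTop 0).mono fun i => itemShare_nonneg (m i)
  have hE_div : Tendsto (fun i => E i / (s i + 1)) l atTop := by
    refine tendsto_atTop_mono' l ?_
      ((tendsto_mul_lowUtility_div hq.1 hr hgrow).const_mul_atTop (mul_pos hq.1 hα))
    filter_upwards [hs] with i hi
    have hlow_i := hlow _ (lowUtility_mem_Icc hq hi)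
    calc q * α * (m i * lowUtility q (s i) / (s i + 1))
        = m i * (q * (α * lowUtility q (s i))) / (s i + 1) := by ring
      _ ≤ E i / (s i + 1) := by
          have := mul_nonneg hα.le (lowUtility_mem_Icc hq hi).1
          simp only [E]
          gcongr
  refine tendsto_utilMeasure_card_cheapItems_lt ?_ ?_
  · refine tendsto_atTop_mono' l ?_ hE_div
    filter_upwards [hs] with i hi
    exact div_le_self (by positivity) (by linarith)
  · filter_upwards [hs, hE_div.eventually_ge_atTop (2 / q)] with i hi hEi
    rw [le_div_iff₀ (by linarith)] at hEi
    calc (s i + 1) / q = 2 / q * (s i + 1) / 2 := by ring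
      _ ≤ E i / 2 := by gcongr

lemma tendsto_utilMeasure_exists_isWEF (hD : ∀ᵐ x ∂D, x ∈ Set.Icc 0 1) (hmean : 0 < ∫ x, x ∂D)
    (hα : 0 < α) (hlow : ∀ b ∈ Set.Icc 0 1, α * b ≤ D.real (Set.Iic b)) {w : ι → ℝ}
    (hw : ∀ i, 0 < w i) (hr : Tendsto r l atTop)
    (hgrow : Tendsto (fun i => (m i : ℝ) / √(r i)) l atTop) :
    Tendsto (fun i => utilMeasure 2 (m i) D
      {u | ∃ A : Fin 2 → Finset (Fin (m i)), IsAllocation A ∧ IsWEF ![w i, r i * w i] u A})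
      l (𝓝 1) := by
  set q := (∫ x, x ∂D) / 2
  have hDq : q ≤ D.real (Set.Ici q) :=
    half_integral_le_measureReal_half_integral_le aemeasurable_id hD
  have hq : q ∈ Set.Ioc 0 1 := ⟨half_pos hmean, hDq.trans measureReal_le_one⟩
  have hfew := tendsto_utilMeasure_card_cheapItems_lt_itemShare hα hlow hq hDq hr hgrow
  have hpoor := tendsto_utilMeasure_sum_agent_lt (n := 2) hD hmean
    (tendsto_natCast_of_div_sqrt hr hgrow) 1
  refine tendsto_measure_one_of_tendsto_measure_zero
    (tendsto_of_tendsto_of_tendsto_of_le_of_le tendsto_const_nhds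
      (by simpa using hfew.add hpoor) (fun i => zero_le) fun i => measure_union_le _ _) ?_
  filter_upwards [hr.eventually_gt_atTop 0] with i hri
  filter_upwards [ae_utilMeasure_of_ae hD] with u hu hgood
  simp only [Set.mem_union, Set.mem_ofPred_eq, not_or, not_lt] at hgood
  exact exists_isWEF_of_le_card_cheapItems (hw i) hri hq (fun g => (hu 0 g).2) hgood.2 hgood.1

theorem two_agents_existence_general (hD : ∀ᵐ x ∂D, x ∈ Set.Icc 0 1) (hmean : 0 < ∫ x, x ∂D)
    (hα : 0 < α) (hlow : ∀ b ∈ Set.Icc 0 1, α * b ≤ D.real (Set.Iic b)) {w : ι → ℝ}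
    (hw : ∀ i, 0 < w i) (hr : Tendsto r l atTop)
    (hgrow : Tendsto (fun i => (m i : ℝ) / √(r i)) l atTop) :
    Tendsto (fun i => utilMeasure 2 (m i) D
        {u | ∃ A : Fin 2 → Finset (Fin (m i)), IsAllocation A ∧ IsWEF ![w i, r i * w i] u A})
      l (𝓝 1) ∧
    Tendsto (fun i => utilMeasure 2 (m i) D
        {u | ∃ A : Fin 2 → Finset (Fin (m i)), IsAllocation A ∧ IsWPROP ![w i, r i * w i] u A})
      l (𝓝 1) := by
  have hWEF := tendsto_utilMeasure_exists_isWEF hD hmean hα hlow hw hr hgrow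
  refine ⟨hWEF, tendsto_of_tendsto_of_tendsto_of_le_of_le' hWEF tendsto_const_nhds ?_
    (.of_forall fun i => prob_le_one)⟩
  filter_upwards [hr.eventually_gt_atTop 0] with i hri
  refine measure_mono fun u ⟨A, hA, hA_WEF⟩ => ⟨A, hA, hA_WEF.isWPROP ?_ hA⟩
  exact Fin.forall_fin_two.2 ⟨hw i, mul_pos hri (hw i)⟩

end Existence

namespace PDFBounded

variable {α β : ℝ} {D : Measure ℝ}

lemma absolutelyContinuous (hD : PDFBounded α β D) :
    D ≪ volume.restrict (Set.Icc 0 1) := by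
  obtain ⟨f, rfl, -⟩ := hD
  exact withDensity_absolutelyContinuous _ f

lemma ae_mem_Icc (hD : PDFBounded α β D) : ∀ᵐ x ∂D, x ∈ Set.Icc 0 1 :=
  hD.absolutelyContinuous.ae_le (ae_restrict_mem measurableSet_Icc)

lemma integral_pos [IsProbabilityMeasure D] (hD : PDFBounded α β D) : 0 < ∫ x, x ∂D := by
  have hint : Integrable (fun x : ℝ => x) D :=
    (memLp_of_bounded hD.ae_mem_Icc (by fun_prop) 1).integrable le_rfl
  have hne : ∀ᵐ x ∂D, x ≠ 0 := (hD.absolutelyContinuous.trans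
    Measure.restrict_le_self.absolutelyContinuous).ae_le (Measure.ae_ne volume 0)
  have hsupport : D (Function.support fun x : ℝ => x) = 1 :=
    (measure_congr (eventuallyEq_univ.2 hne)).trans measure_univ
  rw [integral_pos_iff_support_of_nonneg_ae (hD.ae_mem_Icc.mono fun x hx => hx.1) hint, hsupport]
  exact zero_lt_one

lemma mul_le_measureReal_Iic [IsFiniteMeasure D] (hα : 0 ≤ α) (hD : PDFBounded α β D) {b : ℝ}
    (hb : b ≤ 1) : α * b ≤ D.real (Set.Iic b) := by
  obtain ⟨f, hf, hfb⟩ := hD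
  rw [measureReal_def, ← ENNReal.ofReal_le_iff_le_toReal (measure_ne_top _ _)]
  have hsub : Set.Icc 0 b ⊆ Set.Icc (0 : ℝ) 1 := Set.Icc_subset_Icc_right hb
  calc ENNReal.ofReal (α * b) = ∫⁻ _ in Set.Icc 0 b, ENNReal.ofReal α := by
        rw [setLIntegral_const, Real.volume_Icc, sub_zero, ENNReal.ofReal_mul hα]
    _ ≤ ∫⁻ x in Set.Icc 0 b, f x :=
        setLIntegral_mono' measurableSet_Icc fun x hx => (hfb x (hsub hx)).1
    _ = D (Set.Icc 0 b) := by
        rw [hf, withDensity_apply _ measurableSet_Icc,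
          Measure.restrict_restrict measurableSet_Icc, Set.inter_eq_left.2 hsub]
    _ ≤ D (Set.Iic b) := measure_mono Set.Icc_subset_Iic_self

end PDFBounded

/-- Two agents with weights `w₁` and `w₂ = r·w₁` where `r ≥ 1`, and a PDF-bounded
distribution `D` on `[0,1]`.  For any function `m = m(r)` of positive integers with
`m(r)/√r → ∞`, when the `2m` utilities are drawn independently from `D`, the probability
that a WEF allocation exists tends to `1` as `r → ∞`; the same holds for WPROP. -/
theorem two_agents_existence (D : Measure ℝ) [IsProbabilityMeasure D]
    (hD : ∃ α β : ℝ, 0 < α ∧ 0 < β ∧ PDFBounded α β D)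
    (w1 : ℝ) (hw1 : 0 < w1)
    (m : ℝ → ℕ) (hm : ∀ r, 0 < m r)
    (hgrow : Filter.Tendsto (fun r : ℝ => (m r : ℝ) / Real.sqrt r)
      Filter.atTop Filter.atTop) :
    Filter.Tendsto
      (fun r : ℝ => utilMeasure 2 (m r) D
        {u | ∃ A : Fin 2 → Finset (Fin (m r)), IsAllocation A ∧ IsWEF ![w1, r * w1] u A})
      Filter.atTop (nhds 1) ∧
    Filter.Tendsto
      (fun r : ℝ => utilMeasure 2 (m r) D
        {u | ∃ A : Fin 2 → Finset (Fin (m r)), IsAllocation A ∧ IsWPROP ![w1, r * w1] u A})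
      Filter.atTop (nhds 1) := by
  obtain ⟨α, β, hα, -, hPDF⟩ := hD
  exact two_agents_existence_general hPDF.ae_mem_Icc hPDF.integral_pos hα
    (fun b hb => hPDF.mul_le_measureReal_Iic hα.le hb.2) (fun _ => hw1) tendsto_id hgrow
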